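/- Let ν be a lattice path. If T is a ν-tree and T' is obtained from T by a right rotation, then T' is also a ν-tree (its points are pairwise ν-compatible and it is maximal with this property). -/

import Mathlib

open scoped Classical

/-! Lattice paths: `true` = north step, `false` = east step. -/

def eastSteps (ν : List Bool) : ℕ := ν.count false
def northSteps (ν : List Bool) : ℕ := ν.count true

/-- Height at which the path first reaches abscissa `x`. -/
def heightAt : List Bool → ℕ → ℕ
  | _, 0 => 0
  | [], _ + 1 => 0
  | true :: rest, x + 1 => heightAt rest (x + 1) + 1
  | false :: rest, x + 1 => heightAt rest x

/-- Lattice point of a path after `i` steps. -/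
def pointAt (μ : List Bool) (i : ℕ) : ℕ × ℕ :=
  ((μ.take i).count false, (μ.take i).count true)

/-- The set `A_ν` of lattice points weakly above `ν`. -/
def APts (ν : List Bool) : Set (ℕ × ℕ) :=
  {p | p.1 ≤ eastSteps ν ∧ heightAt ν p.1 ≤ p.2 ∧ p.2 ≤ northSteps ν}

def Incompatible (ν : List Bool) (p q : ℕ × ℕ) : Prop :=
  (p.1 < q.1 ∧ p.2 < q.2 ∧ (q.1, p.2) ∈ APts ν) ∨
    (q.1 < p.1 ∧ q.2 < p.2 ∧ (p.1, q.2) ∈ APts ν)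

def Compatible (ν : List Bool) (p q : ℕ × ℕ) : Prop := ¬ Incompatible ν p q

def IsNuTree (ν : List Bool) (T : Set (ℕ × ℕ)) : Prop :=
  T ⊆ APts ν ∧ T.Pairwise (Compatible ν) ∧
    ∀ T', T' ⊆ APts ν → T'.Pairwise (Compatible ν) → T ⊆ T' → T' = T

def IsRightRotationAt (T T' : Set (ℕ × ℕ)) (q q' : ℕ × ℕ) : Prop :=
  ∃ x y x'' y', q = (x, y) ∧ q' = (x'', y') ∧ x < x'' ∧ y < y' ∧
    (x, y) ∈ T ∧ (x, y') ∈ T ∧ (x'', y) ∈ T ∧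
    (∀ b, y < b → b < y' → (x, b) ∉ T) ∧
    (∀ a, x < a → a < x'' → (a, y) ∉ T) ∧
    (∀ a, x < a → a < x'' → (a, y') ∉ T) ∧
    (∀ b, y < b → b < y' → (x'', b) ∉ T) ∧
    T' = (T \ {(x, y)}) ∪ {(x'', y')}

def IsRightRotation (T T' : Set (ℕ × ℕ)) : Prop :=
  ∃ q q', IsRightRotationAt T T' q q'

/-- Order relation of the rotation poset of ν-trees. -/
def TreeLE (ν : List Bool) : Set (ℕ × ℕ) → Set (ℕ × ℕ) → Prop :=
  Relation.ReflTransGen fun A B => IsNuTree ν A ∧ IsNuTree ν B ∧ IsRightRotation A B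

def IsNuPath (ν μ : List Bool) : Prop :=
  eastSteps μ = eastSteps ν ∧ northSteps μ = northSteps ν ∧
    ∀ i ≤ μ.length, pointAt μ i ∈ APts ν

noncomputable def horiz (ν : List Bool) (p : ℕ × ℕ) : ℕ :=
  sSup {k | (p.1 + k, p.2) ∈ APts ν}

/-- Covering relation of the ν-Tamari lattice. -/
def TamariCover (ν μ μ' : List Bool) : Prop :=
  IsNuPath ν μ ∧ IsNuPath ν μ' ∧
    ∃ i j, 0 < i ∧ i < j ∧ j ≤ μ.length ∧
      μ.getD (i - 1) true = false ∧ μ.getD i false = true ∧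
      horiz ν (pointAt μ j) = horiz ν (pointAt μ i) ∧
      (∀ k, i < k → k < j → horiz ν (pointAt μ k) ≠ horiz ν (pointAt μ i)) ∧
      μ' = μ.take (i - 1) ++ (μ.drop i).take (j - i) ++ [false] ++ μ.drop j

def TamariLE (ν : List Bool) : List Bool → List Bool → Prop :=
  Relation.ReflTransGen (TamariCover ν)

/-! Flushing maps -/

def rowAvail (ν : List Bool) (y : ℕ) : List ℕ :=
  ((List.range (eastSteps ν + 1)).filter fun x => decide (heightAt ν x ≤ y)).reverse

def pointsAtHeight (μ : List Bool) (y : ℕ) : ℕ :=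
  ((List.range (μ.length + 1)).filter fun i => decide ((μ.take i).count true = y)).length

def rflushAux (ν : List Bool) : List ℕ → ℕ → List ℕ → List (ℕ × ℕ)
  | [], _, _ => []
  | c :: rest, y, forbidden =>
    let placed := ((rowAvail ν y).filter fun x => decide (x ∉ forbidden)).take c
    placed.map (fun x => (x, y)) ++ rflushAux ν rest (y + 1) (forbidden ++ placed.dropLast)

/-- Right-flushing map `R`. -/
def Rflush (ν μ : List Bool) : Set (ℕ × ℕ) :=
  {p | p ∈ rflushAux ν ((List.range (northSteps ν + 1)).map (pointsAtHeight μ)) 0 []}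

def lflushAux (m : ℕ) : List ℕ → ℕ → List ℕ → List (ℕ × ℕ)
  | [], _, _ => []
  | c :: rest, y, forbidden =>
    let placed := ((List.range (m + 1)).filter fun x => decide (x ∉ forbidden)).take c
    placed.map (fun x => (x, y)) ++ lflushAux m rest (y + 1) (forbidden ++ placed.dropLast)

noncomputable def rowCount (T : Set (ℕ × ℕ)) (y : ℕ) : ℕ := {x | (x, y) ∈ T}.ncard

/-- Left-flushing map `L`. -/
noncomputable def Lflush (ν : List Bool) (T : Set (ℕ × ℕ)) : Set (ℕ × ℕ) :=
  {p | p ∈ lflushAux (eastSteps ν) ((List.range (northSteps ν + 1)).map (rowCount T)) 0 []}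

def pathPointSet (μ : List Bool) : Set (ℕ × ℕ) := {p | ∃ i ≤ μ.length, pointAt μ i = p}

/-! Bracket vectors (0-indexed positions `0,…,ℓ`). -/

noncomputable def fpos (ν : List Bool) (k : ℕ) : ℕ :=
  sSup {i | i ≤ ν.length ∧ (ν.take i).count true = k}

def bmin (ν : List Bool) : List ℕ :=
  (List.range (ν.length + 1)).map fun i => (ν.take i).count true

def IsBracketVector (ν : List Bool) (b : List ℕ) : Prop :=
  b.length = ν.length + 1 ∧
    (∀ k ≤ northSteps ν, b.getD (fpos ν k) 0 = k) ∧
    (∀ i < b.length, (bmin ν).getD i 0 ≤ b.getD i 0 ∧ b.getD i 0 ≤ northSteps ν) ∧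
    ∀ i j k, i < j → j < k → k < b.length →
      ¬(b.getD i 0 = b.getD k 0 ∧ b.getD i 0 < b.getD j 0)

noncomputable def leftChild (T : Set (ℕ × ℕ)) (p : ℕ × ℕ) : Option (ℕ × ℕ) :=
  if ∃ b, (p.1, b) ∈ T ∧ b < p.2 then some (p.1, sSup {b | (p.1, b) ∈ T ∧ b < p.2})
  else none

noncomputable def rightChild (T : Set (ℕ × ℕ)) (p : ℕ × ℕ) : Option (ℕ × ℕ) :=
  if ∃ a, (a, p.2) ∈ T ∧ p.1 < a then
    if ∃ b, (sInf {a | (a, p.2) ∈ T ∧ p.1 < a}, b) ∈ T ∧ p.2 < b then none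
    else some (sInf {a | (a, p.2) ∈ T ∧ p.1 < a}, p.2)
  else none

noncomputable def inorderAux (T : Set (ℕ × ℕ)) : ℕ → ℕ × ℕ → List (ℕ × ℕ)
  | 0, _ => []
  | fuel + 1, p =>
    (match leftChild T p with
      | none => []
      | some l => inorderAux T fuel l) ++ p ::
      (match rightChild T p with
        | none => []
        | some r => inorderAux T fuel r)

/-- Bracket vector of a ν-tree: y-coordinates read in in-order from the root `(0,n)`. -/
noncomputable def bracketOfTree (ν : List Bool) (T : Set (ℕ × ℕ)) : List ℕ :=
  (inorderAux T T.ncard (0, northSteps ν)).map Prod.snd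

noncomputable def bracketAssign (ν μ : List Bool) : List (ℕ × ℕ) :=
  ((List.range (northSteps ν + 1)).foldl
    (fun (st : List (ℕ × ℕ) × List ℕ) k =>
      let picked := ((st.2.filter fun i => decide (i ≤ fpos ν k)).reverse).take
        (pointsAtHeight μ k)
      (st.1 ++ picked.map fun i => (i, k), st.2.filter fun i => decide (i ∉ picked)))
    ([], List.range (ν.length + 1))).1

/-- Bracket vector of a ν-path. -/
noncomputable def bracketOfPath (ν μ : List Bool) : List ℕ :=
  (List.range (ν.length + 1)).map fun i => ((bracketAssign ν μ).lookup i).getD 0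

/-- Componentwise order on (equal length) integer vectors. -/
def listLE (b b' : List ℕ) : Prop :=
  b.length = b'.length ∧ ∀ i, b.getD i 0 ≤ b'.getD i 0

/-! Reversal -/

def revPath (ν : List Bool) : List Bool := ν.reverse.map fun s => !s

def revTree (ν : List Bool) (T : Set (ℕ × ℕ)) : Set (ℕ × ℕ) :=
  (fun p : ℕ × ℕ => (northSteps ν - p.2, eastSteps ν - p.1)) '' T

/-! Pipe dreams and subword complexes -/

def dOf (ν : List Bool) (p : ℕ × ℕ) : ℕ := p.1 + (northSteps ν - p.2)

def labelPerm (ν : List Bool) (p : ℕ × ℕ) : Equiv.Perm ℕ :=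
  Equiv.swap (dOf ν p + 1) (dOf ν p + 2)

/-- The points of `A_ν` in reading order: rows from bottom to top, each left to right. -/
def readingList (ν : List Bool) : List (ℕ × ℕ) :=
  ((List.range (northSteps ν + 1)).map fun y =>
    ((List.range (eastSteps ν + 1)).filter fun x => decide (heightAt ν x ≤ y)).map
      fun x => (x, y)).flatten

/-- The minimal ν-tree. -/
def TminSet (ν : List Bool) : Set (ℕ × ℕ) :=
  {p | p ∈ APts ν ∧ (p.1 = 0 ∨ ∃ i < ν.length, ν.getD i true = false ∧ p = pointAt ν (i + 1))}

noncomputable def prodOver (ν : List Bool) (C : Set (ℕ × ℕ)) : Equiv.Perm ℕ :=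
  (((readingList ν).filter fun p => decide (p ∈ C)).map (labelPerm ν)).prod

/-- Coxeter length: number of inversions. -/
noncomputable def lenInv (π : Equiv.Perm ℕ) : ℕ :=
  {q : ℕ × ℕ | q.1 < q.2 ∧ π q.2 < π q.1}.ncard

noncomputable def piNu (ν : List Bool) : Equiv.Perm ℕ := prodOver ν (APts ν \ TminSet ν)

def Qword (ν : List Bool) : List (Equiv.Perm ℕ) := (readingList ν).map (labelPerm ν)

noncomputable def prodAt (Q : List (Equiv.Perm ℕ)) (P : Finset ℕ) : Equiv.Perm ℕ :=
  (((List.range Q.length).filter fun i => decide (i ∈ P)).map fun i => Q.getD i 1).prod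

def IsFacet (Q : List (Equiv.Perm ℕ)) (π : Equiv.Perm ℕ) (I : Finset ℕ) : Prop :=
  I ⊆ Finset.range Q.length ∧
    prodAt Q (Finset.range Q.length \ I) = π ∧
    (Finset.range Q.length \ I).card = lenInv π

def IncFlip (Q : List (Equiv.Perm ℕ)) (π : Equiv.Perm ℕ) (I J : Finset ℕ) : Prop :=
  IsFacet Q π I ∧ IsFacet Q π J ∧ ∃ i ∈ I, ∃ j ∈ J, i < j ∧ I.erase i = J.erase j

def FlipLE (Q : List (Equiv.Perm ℕ)) (π : Equiv.Perm ℕ) : Finset ℕ → Finset ℕ → Prop :=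
  Relation.ReflTransGen (IncFlip Q π)

/-- The maximal ν-tree. -/
def TmaxSet (ν : List Bool) : Set (ℕ × ℕ) :=
  {p | (p.1 ≤ eastSteps ν ∧ p.2 = northSteps ν) ∨ ∃ i < ν.length, ν.getD i false = true ∧ p = pointAt ν i}

/-!
The only property of `A_ν` that matters is that it is a sublattice of `ℕ × ℕ`. Let `T'` replace
`q = (x, y)` by `q' = (X, Y)`, and write `p = (x, Y)`, `r = (X, y)`.

A point of `T` incompatible with `q'` would be incompatible with `p`, `q` or `r`, or lie on the left
or bottom side of the rectangle, which are empty. For maximality, let `s ∉ T'` be compatible with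
all of `T'`. As `q` and `q'` are incompatible, `s ∉ T`, so by maximality of `T` some point of `T` is
incompatible with `s`, and it can only be `q`. Compatibility with `p` and `r` then confines `s` to
the half-open rectangle `(x, X] × (y, Y]`. Its interior is incompatible with `q'`. If `s` is on the
right (top) side, its projection to the left (bottom) side is not in `T`, and whatever is
incompatible with that projection is also incompatible with `s`.
-/

section MaximalPairwise

variable {ι : Type*} {r : ι → ι → Prop} [Std.Symm r] {A T : Set ι}

theorem exists_not_rel_of_maximal_pairwise
    (hT : Maximal (fun S => S ⊆ A ∧ S.Pairwise r) T) {s : ι} (hsA : s ∈ A) (hsT : s ∉ T) :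
    ∃ t ∈ T, ¬ r s t := by
  by_contra! hrel
  have hinsert : insert s T ⊆ A ∧ (insert s T).Pairwise r :=
    ⟨Set.insert_subset hsA hT.prop.1,
      hT.prop.2.insert_of_symm fun t ht _ => hrel t ht⟩
  exact hsT (hT.le_of_ge hinsert (Set.subset_insert s T) (Set.mem_insert s T))

theorem maximal_pairwise_exchange
    (hT : Maximal (fun S => S ⊆ A ∧ S.Pairwise r) T) {q q' : ι} (hq' : q' ∈ A)
    (hqq' : ¬ r q q') (hrel : ∀ t ∈ T, t ≠ q → r q' t)
    (hunique : ∀ s ∈ A, (∀ t ∈ T, t ≠ q → r s t) → ¬ r s q → r s q' → s = q') :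
    Maximal (fun S => S ⊆ A ∧ S.Pairwise r) (insert q' (T \ {q})) := by
  refine ⟨⟨Set.insert_subset hq' (Set.sdiff_subset.trans hT.prop.1),
    (hT.prop.2.mono Set.sdiff_subset).insert_of_symm fun t ht _ => hrel t ht.1 ht.2⟩, ?_⟩
  rintro S ⟨hSA, hS⟩ hT'S s hs
  by_contra hsT'
  have hq'S : q' ∈ S := hT'S (Set.mem_insert q' _)
  have hTS : ∀ t ∈ T, t ≠ q → t ∈ S := fun t ht htq => hT'S (Or.inr ⟨ht, htq⟩)
  have hsq' : s ≠ q' := fun h => hsT' (Or.inl h)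
  have hrs : r s q' := hS hs hq'S hsq'
  have hsT : s ∉ T := fun h => hsT' (Or.inr ⟨h, fun hsq : s = q => hqq' (hsq ▸ hrs)⟩)
  have hsTq : ∀ t ∈ T, t ≠ q → r s t := fun t ht htq =>
    hS hs (hTS t ht htq) fun hst => hsT (hst ▸ ht)
  obtain ⟨t, ht, hst⟩ := exists_not_rel_of_maximal_pairwise hT (hSA hs) hsT
  have htq : t = q := by
    by_contra htq
    exact hst (hsTq t ht htq)
  exact hsq' (hunique s (hSA hs) hsTq (htq ▸ hst) hrs)

end MaximalPairwise

section Region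

variable {α β : Type*} {A T : Set (α × β)}

section LT

variable [LT α] [LT β]

/-- Incompatibility of two points relative to an arbitrary region `A` of a product of two
ordered types; `Incompatible ν` is the case of the region `A_ν`. -/
def IncompatibleIn (A : Set (α × β)) (p q : α × β) : Prop :=
  (p.1 < q.1 ∧ p.2 < q.2 ∧ (q.1, p.2) ∈ A) ∨ (q.1 < p.1 ∧ q.2 < p.2 ∧ (p.1, q.2) ∈ A)

/-- Compatibility relative to a region `A`; `Compatible ν` is the case of the region `A_ν`. -/
def CompatibleIn (A : Set (α × β)) (p q : α × β) : Prop := ¬ IncompatibleIn A p q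

/-- The analogue of a `ν`-tree for a region `A`: a maximal set of pairwise compatible points
of `A`. -/
def IsTreeIn (A T : Set (α × β)) : Prop :=
  Maximal (fun S => S ⊆ A ∧ S.Pairwise (CompatibleIn A)) T

/-- The rectangle `[x, X] × [y, Y]` of a right rotation of `T`, which replaces its lower left
corner by its upper right one: the other three corners belong to `T`, and no point of `T` lies
strictly inside its left and bottom sides. -/
structure IsRotationRectangle (T : Set (α × β)) (x X : α) (y Y : β) : Prop where
  fst_lt : x < X
  snd_lt : y < Y
  lowerLeft_mem : (x, y) ∈ T
  upperLeft_mem : (x, Y) ∈ T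
  lowerRight_mem : (X, y) ∈ T
  left_notMem : ∀ b, y < b → b < Y → (x, b) ∉ T
  bottom_notMem : ∀ a, x < a → a < X → (a, y) ∉ T

instance (A : Set (α × β)) : Std.Symm (CompatibleIn A) :=
  ⟨fun _ _ h h' => h h'.symm⟩

theorem IsTreeIn.subset (hT : IsTreeIn A T) : T ⊆ A := hT.prop.1

theorem IsTreeIn.pairwise (hT : IsTreeIn A T) : T.Pairwise (CompatibleIn A) := hT.prop.2

theorem IsTreeIn.exists_incompatibleIn (hT : IsTreeIn A T) {s : α × β} (hsA : s ∈ A)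
    (hsT : s ∉ T) : ∃ t ∈ T, IncompatibleIn A s t := by
  simpa only [CompatibleIn, not_not] using exists_not_rel_of_maximal_pairwise hT hsA hsT

end LT

theorem corner_notMem_of_pairwise_compatibleIn [Preorder α] [Preorder β]
    (hT : T.Pairwise (CompatibleIn A)) {a c : α} {b d : β} (hab : (a, b) ∈ T) (hcd : (c, d) ∈ T)
    (hac : a < c) (hbd : b < d) : (c, b) ∉ A :=
  fun hcb => hT hab hcd (ne_of_apply_ne Prod.fst hac.ne) (Or.inl ⟨hac, hbd, hcb⟩)

theorem lowerLeft_mem_of_infClosed [SemilatticeInf α] [SemilatticeInf β] (hA : InfClosed A)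
    {a c : α} {b d : β} (hcb : (c, b) ∈ A) (had : (a, d) ∈ A) (hac : a ≤ c)
    (hbd : b ≤ d) : (a, b) ∈ A := by
  simpa only [Prod.mk_inf_mk, inf_eq_right.2 hac, inf_eq_left.2 hbd] using hA hcb had

theorem upperRight_mem_of_supClosed [SemilatticeSup α] [SemilatticeSup β] (hA : SupClosed A)
    {a c : α} {b d : β} (hcb : (c, b) ∈ A) (had : (a, d) ∈ A) (hac : a ≤ c)
    (hbd : b ≤ d) : (c, d) ∈ A := by
  simpa only [Prod.mk_sup_mk, sup_eq_left.2 hac, sup_eq_right.2 hbd] using hA hcb had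

theorem incompatibleIn_of_supClosed [SemilatticeSup α] [SemilatticeSup β] (hA : SupClosed A)
    {a c : α} {b d e : β} (hce : (c, e) ∈ A) (hab : (a, b) ∈ A) (hac : a < c) (heb : e ≤ b)
    (hbd : b < d) : IncompatibleIn A (a, b) (c, d) :=
  Or.inl ⟨hac, hbd, upperRight_mem_of_supClosed hA hce hab hac.le heb⟩

namespace IsRotationRectangle

variable [LinearOrder α] [LinearOrder β] {x X a : α} {y Y b : β}

theorem upperRight_mem (h : IsRotationRectangle T x X y Y) (hA : SupClosed A) (hTA : T ⊆ A) :
    (X, Y) ∈ A :=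
  upperRight_mem_of_supClosed hA (hTA h.lowerRight_mem) (hTA h.upperLeft_mem) h.fst_lt.le
    h.snd_lt.le

theorem incompatibleIn_lowerLeft_upperRight (h : IsRotationRectangle T x X y Y) (hTA : T ⊆ A) :
    IncompatibleIn A (x, y) (X, Y) :=
  Or.inl ⟨h.fst_lt, h.snd_lt, hTA h.lowerRight_mem⟩

theorem compatibleIn_upperRight (h : IsRotationRectangle T x X y Y) (hA : InfClosed A)
    (hTA : T ⊆ A) (hT : T.Pairwise (CompatibleIn A)) {t : α × β} (ht : t ∈ T)
    (htq : t ≠ (x, y)) : CompatibleIn A (X, Y) t := by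
  obtain ⟨c, d⟩ := t
  rintro (⟨hXc, hYd, hcorner⟩ | ⟨hcX, hdY, hcorner⟩)
  · exact corner_notMem_of_pairwise_compatibleIn hT h.upperLeft_mem ht (h.fst_lt.trans hXc) hYd
      hcorner
  have hxc : x ≤ c := by
    by_contra! hcx
    exact corner_notMem_of_pairwise_compatibleIn hT ht h.upperLeft_mem hcx hdY <|
      lowerLeft_mem_of_infClosed hA hcorner (hTA h.upperLeft_mem) h.fst_lt.le hdY.le
  have hyd : y ≤ d := by
    by_contra! hdy
    exact corner_notMem_of_pairwise_compatibleIn hT ht h.lowerRight_mem hcX hdy hcorner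
  rcases hxc.eq_or_lt with rfl | hxc
  · rcases hyd.eq_or_lt with rfl | hyd
    · exact htq rfl
    · exact h.left_notMem d hyd hdY ht
  · rcases hyd.eq_or_lt with rfl | hyd
    · exact h.bottom_notMem c hxc hcX ht
    · exact corner_notMem_of_pairwise_compatibleIn hT h.lowerLeft_mem ht hxc hyd <|
        lowerLeft_mem_of_infClosed hA (hTA h.lowerRight_mem) (hTA ht) hcX.le hyd.le

theorem mem_Ioc_prod_Ioc (h : IsRotationRectangle T x X y Y) (hA : SupClosed A)
    (hpA : (x, Y) ∈ A) {s : α × β} (hsp : CompatibleIn A s (x, Y))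
    (hsr : CompatibleIn A s (X, y)) (hsq : IncompatibleIn A s (x, y)) :
    s ∈ Set.Ioc x X ×ˢ Set.Ioc y Y := by
  rcases hsq with ⟨hsx, hsy, hcorner⟩ | ⟨hxs, hys, hcorner⟩
  · exact absurd (Or.inl ⟨hsx, hsy.trans h.snd_lt, hcorner⟩) hsp
  refine ⟨⟨hxs, ?_⟩, ⟨hys, ?_⟩⟩
  · by_contra! hXs
    exact hsr (Or.inr ⟨hXs, hys, hcorner⟩)
  · by_contra! hYs
    exact hsp (Or.inr ⟨hxs, hYs, upperRight_mem_of_supClosed hA hcorner hpA hxs.le h.snd_lt.le⟩)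

theorem exists_incompatibleIn_right (h : IsRotationRectangle T x X y Y) (hA : InfClosed A)
    (hT : IsTreeIn A T) (hsA : (X, b) ∈ A) (hyb : y < b) (hbY : b < Y) :
    ∃ t ∈ T, t ≠ (x, y) ∧ IncompatibleIn A (X, b) t := by
  have hxb : (x, b) ∈ A :=
    lowerLeft_mem_of_infClosed hA hsA (hT.subset h.upperLeft_mem) h.fst_lt.le hbY.le
  obtain ⟨⟨c, d⟩, ht, ⟨hxc, hbd, hcorner⟩ | ⟨hcx, hdb, hcorner⟩⟩ :=
    hT.exists_incompatibleIn hxb (h.left_notMem b hyb hbY)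
  · have hXc : X < c := by
      by_contra! hcX
      exact corner_notMem_of_pairwise_compatibleIn hT.pairwise h.lowerLeft_mem ht hxc
        (hyb.trans hbd) <|
        lowerLeft_mem_of_infClosed hA (hT.subset h.lowerRight_mem) (hT.subset ht) hcX
          (hyb.trans hbd).le
    exact ⟨(c, d), ht, ne_of_apply_ne Prod.fst hxc.ne', Or.inl ⟨hXc, hbd, hcorner⟩⟩
  · exact absurd hcorner <|
      corner_notMem_of_pairwise_compatibleIn hT.pairwise ht h.upperLeft_mem hcx
      (hdb.trans hbY)

theorem exists_incompatibleIn_top (h : IsRotationRectangle T x X y Y) (hA : InfClosed A)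
    (hT : IsTreeIn A T) (hsA : (a, Y) ∈ A) (hxa : x < a) (haX : a < X) :
    ∃ t ∈ T, t ≠ (x, y) ∧ IncompatibleIn A (a, Y) t := by
  have hay : (a, y) ∈ A :=
    lowerLeft_mem_of_infClosed hA (hT.subset h.lowerRight_mem) hsA haX.le h.snd_lt.le
  obtain ⟨⟨c, d⟩, ht, ⟨hac, hyd, hcorner⟩ | ⟨hca, hdy, hcorner⟩⟩ :=
    hT.exists_incompatibleIn hay (h.bottom_notMem a hxa haX)
  · exact absurd hcorner <| corner_notMem_of_pairwise_compatibleIn hT.pairwise h.lowerLeft_mem ht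
      (hxa.trans hac) hyd
  · exact ⟨(c, d), ht, ne_of_apply_ne Prod.snd hdy.ne,
      Or.inr ⟨hca, hdy.trans h.snd_lt, hcorner⟩⟩

theorem eq_upperRight_of_compatibleIn (h : IsRotationRectangle T x X y Y) (hA : IsSublattice A)
    (hT : IsTreeIn A T) {s : α × β} (hsA : s ∈ A)
    (hsT : ∀ t ∈ T, t ≠ (x, y) → CompatibleIn A s t) (hsq : IncompatibleIn A s (x, y))
    (hsq' : CompatibleIn A s (X, Y)) : s = (X, Y) := by
  have hpq : (x, Y) ≠ (x, y) := ne_of_apply_ne Prod.snd h.snd_lt.ne'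
  have hrq : (X, y) ≠ (x, y) := ne_of_apply_ne Prod.fst h.fst_lt.ne'
  obtain ⟨⟨hxs, hsX⟩, ⟨hys, hsY⟩⟩ :=
    h.mem_Ioc_prod_Ioc hA.supClosed (hT.subset h.upperLeft_mem)
      (hsT _ h.upperLeft_mem hpq) (hsT _ h.lowerRight_mem hrq) hsq
  obtain ⟨a, b⟩ := s
  rcases hsX.eq_or_lt with rfl | haX <;> rcases hsY.eq_or_lt with rfl | hbY
  · rfl
  · obtain ⟨t, ht, htq, hst⟩ := h.exists_incompatibleIn_right hA.infClosed hT hsA hys hbY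
    exact absurd hst (hsT t ht htq)
  · obtain ⟨t, ht, htq, hst⟩ := h.exists_incompatibleIn_top hA.infClosed hT hsA hxs haX
    exact absurd hst (hsT t ht htq)
  · exact absurd (incompatibleIn_of_supClosed hA.supClosed
      (hT.subset h.lowerRight_mem) hsA haX hys.le hbY) hsq'

end IsRotationRectangle

theorem rotation_of_nuTree_is_nuTree_general [LinearOrder α] [LinearOrder β]
    (hA : IsSublattice A) (hT : IsTreeIn A T) {x X : α} {y Y : β}
    (h : IsRotationRectangle T x X y Y) : IsTreeIn A (insert (X, Y) (T \ {(x, y)})) :=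
  maximal_pairwise_exchange hT (h.upperRight_mem hA.supClosed hT.subset)
    (not_not_intro (h.incompatibleIn_lowerLeft_upperRight hT.subset))
    (fun _ => h.compatibleIn_upperRight hA.infClosed hT.subset hT.pairwise)
    fun _ hsA hsT hsq hsq' => h.eq_upperRight_of_compatibleIn hA hT hsA hsT (not_not.1 hsq) hsq'

end Region

theorem monotone_heightAt (ν : List Bool) : Monotone (heightAt ν) := by
  refine monotone_nat_of_le_succ fun x => ?_
  induction ν generalizing x with
  | nil => cases x <;> simp only [heightAt, le_refl]
  | cons step ν ih =>
    cases x with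
    | zero => simp only [heightAt, Nat.zero_le]
    | succ x => cases step <;> simp only [heightAt, Nat.add_le_add_iff_right, ih]

theorem isSublattice_APts (ν : List Bool) : IsSublattice (APts ν) where
  supClosed := fun p ⟨hpE, hph, hpN⟩ q ⟨hqE, hqh, hqN⟩ =>
    ⟨sup_le hpE hqE, ((monotone_heightAt ν).map_sup p.1 q.1).trans_le (sup_le_sup hph hqh),
      sup_le hpN hqN⟩
  infClosed := fun p ⟨hpE, hph, hpN⟩ q ⟨_, hqh, _⟩ =>
    ⟨inf_le_of_left_le hpE,
      ((monotone_heightAt ν).map_inf p.1 q.1).trans_le (inf_le_inf hph hqh),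
      inf_le_of_left_le hpN⟩

theorem isNuTree_iff_isTreeIn {ν : List Bool} {T : Set (ℕ × ℕ)} :
    IsNuTree ν T ↔ IsTreeIn (APts ν) T := by
  constructor
  · rintro ⟨hTA, hT, hmax⟩
    exact ⟨⟨hTA, hT⟩, fun S hS hTS => (hmax S hS.1 hS.2 hTS).le⟩
  · intro hT
    exact ⟨hT.subset, hT.pairwise, fun S hSA hS hTS => (hT.eq_of_subset ⟨hSA, hS⟩ hTS).symm⟩

theorem IsRightRotation.exists_isRotationRectangle {T T' : Set (ℕ × ℕ)}
    (hrot : IsRightRotation T T') :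
    ∃ x X y Y, IsRotationRectangle T x X y Y ∧ T' = insert (X, Y) (T \ {(x, y)}) := by
  obtain ⟨_, _, x, y, X, Y, -, -, hxX, hyY, hq, hp, hr, hleft, hbottom, -, -, rfl⟩ := hrot
  exact ⟨x, X, y, Y, ⟨hxX, hyY, hq, hp, hr, hleft, hbottom⟩, Set.union_singleton⟩

theorem rotation_of_nuTree_is_nuTree (ν : List Bool) (T T' : Set (ℕ × ℕ))
    (hT : IsNuTree ν T) (hrot : IsRightRotation T T') :
    IsNuTree ν T' := by
  obtain ⟨x, X, y, Y, hrect, rfl⟩ := hrot.exists_isRotationRectangle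
  exact isNuTree_iff_isTreeIn.2 <|
    rotation_of_nuTree_is_nuTree_general (isSublattice_APts ν) (isNuTree_iff_isTreeIn.1 hT) hrect
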